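/- arXiv:hep-th/9502165 — 2 statements merged into one kernel-verified Lean document; each statement's English description precedes it below -/
import Mathlib

section
/- For every τ ∈ H₊ and t ∈ ℂ with t ∉ ℤ+τℤ one has the identity 4πi·∂_τ ρ(t,τ) = ∂_t( ρ(t,τ)² + ∂_t ρ(t,τ) ). (Equivalently, the differential form η = ρ(t,τ) dt + (4πi)^{−1}(ρ(t,τ)² + ∂_tρ(t,τ)) dτ appearing as the Cartan part of the KZB connection form Ω is closed.) -/
open Complex Filter Topology MeasureTheory

noncomputable section

/-- Jacobi's theta function `ϑ₁(t,τ)`. -/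
def theta1 (t τ : ℂ) : ℂ :=
  -∑' j : ℤ, Complex.exp ((Real.pi : ℂ) * Complex.I * ((j : ℂ) + 1/2)^2 * τ +
      2 * (Real.pi : ℂ) * Complex.I * ((j : ℂ) + 1/2) * (t + 1/2))

/-- Derivative of `ϑ₁` in the first argument. -/
def theta1' (t τ : ℂ) : ℂ := deriv (fun s => theta1 s τ) t

/-- Membership in the lattice `ℤ + τℤ`. -/
def inLattice (τ t : ℂ) : Prop := ∃ a b : ℤ, t = (a : ℂ) + (b : ℂ) * τ

/-- The function `σ_w(t,τ)`. -/
def sigmaF (w t τ : ℂ) : ℂ := theta1 (w - t) τ * theta1' 0 τ / (theta1 w τ * theta1 t τ)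

/-- The function `ρ(t,τ) = ϑ₁'(t,τ)/ϑ₁(t,τ)`. -/
def rhoF (t τ : ℂ) : ℂ := theta1' t τ / theta1 t τ

/-- The function `E(t,τ) = ϑ₁(t,τ)/ϑ₁'(0,τ)`. -/
def EF (t τ : ℂ) : ℂ := theta1 t τ / theta1' 0 τ

end

/-!
Differentiating the series term by term gives the heat equation `4πi ∂_τ ϑ₁ = ∂_t² ϑ₁`. Since
`ρ = ∂_t log ϑ₁`, one has `ρ² + ∂_t ρ = ∂_t² ϑ₁ / ϑ₁ = 4πi ∂_τ log ϑ₁`, whose derivative in `t` is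
`4πi ∂_τ ρ`. All this needs `ϑ₁` not to vanish, which off the lattice follows from the Jacobi triple
product, the limit of the `q`-binomial theorem for `2n` factors centred at their middle.
-/

open scoped Real

section GaussianBinomial

open Finset

/-- The Gaussian binomial coefficient `[n, k]_q`, given by the `q`-Pascal rule
`[n + 1, k + 1]_q = [n, k]_q + q ^ (k + 1) [n, k + 1]_q`, so that it makes sense in every
commutative semiring. -/
def gaussBinom {R : Type*} [CommSemiring R] (q : R) : ℕ → ℕ → R
  | _, 0 => 1
  | 0, _ + 1 => 0
  | n + 1, k + 1 => gaussBinom q n k + q ^ (k + 1) * gaussBinom q n (k + 1)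

/-- The `q`-Pochhammer symbol `(q; q)_n = (1 - q)(1 - q²)⋯(1 - qⁿ)`, which plays the role of the
factorial of `n` for Gaussian binomial coefficients. -/
def qPochhammer {R : Type*} [CommRing R] (q : R) (n : ℕ) : R :=
  ∏ i ∈ range n, (1 - q ^ (i + 1))

section CommSemiring

variable {R : Type*} [CommSemiring R]

@[simp]
lemma gaussBinom_zero_right (q : R) (n : ℕ) : gaussBinom q n 0 = 1 := by
  cases n <;> rfl

lemma gaussBinom_succ_succ (q : R) (n k : ℕ) :
    gaussBinom q (n + 1) (k + 1) = gaussBinom q n k + q ^ (k + 1) * gaussBinom q n (k + 1) :=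
  rfl

lemma gaussBinom_eq_zero_of_lt (q : R) {n k : ℕ} (h : n < k) : gaussBinom q n k = 0 := by
  induction n generalizing k with
  | zero => obtain ⟨k, rfl⟩ := Nat.exists_eq_succ_of_ne_zero h.ne'; rfl
  | succ n ih =>
    obtain ⟨k, rfl⟩ := Nat.exists_eq_succ_of_ne_zero (Nat.ne_zero_of_lt h)
    rw [Nat.succ_eq_add_one, gaussBinom_succ_succ, ih (by lia), ih (by lia), mul_zero, add_zero]

theorem prod_one_add_pow_mul_eq_sum_gaussBinom (q x : R) (n : ℕ) :
    ∏ i ∈ range n, (1 + q ^ i * x) =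
      ∑ k ∈ range (n + 1), q ^ k.choose 2 * gaussBinom q n k * x ^ k := by
  induction n generalizing x with
  | zero => simp
  | succ n ih =>
    have tail_eq : ∑ k ∈ range (n + 1), q ^ (k + 1).choose 2 * gaussBinom q n (k + 1) *
        (q * x) ^ (k + 1) + 1 = ∑ k ∈ range (n + 1), q ^ k.choose 2 * gaussBinom q n k *
        (q * x) ^ k := by
      rw [sum_range_succ, gaussBinom_eq_zero_of_lt q n.lt_succ_self, sum_range_succ' _ n]
      simp
    calc ∏ i ∈ range (n + 1), (1 + q ^ i * x)
      _ = (∏ i ∈ range n, (1 + q ^ i * (q * x))) * (1 + x) := by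
        simp only [prod_range_succ', pow_succ, mul_assoc, pow_zero, one_mul]
      _ = x * ∑ k ∈ range (n + 1), q ^ k.choose 2 * gaussBinom q n k * (q * x) ^ k +
          (∑ k ∈ range (n + 1), q ^ (k + 1).choose 2 * gaussBinom q n (k + 1) *
            (q * x) ^ (k + 1) + 1) := by
        rw [ih, tail_eq]; ring
      _ = ∑ k ∈ range (n + 2), q ^ k.choose 2 * gaussBinom q (n + 1) k * x ^ k := by
        rw [sum_range_succ' _ (n + 1), mul_sum, ← add_assoc, ← sum_add_distrib]
        congr 1
        · refine sum_congr rfl fun k _ ↦ ?_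
          rw [gaussBinom_succ_succ, Nat.choose_succ_succ' k 1, Nat.choose_one_right]
          ring
        · simp

end CommSemiring

lemma qPochhammer_succ {R : Type*} [CommRing R] (q : R) (n : ℕ) :
    qPochhammer q (n + 1) = qPochhammer q n * (1 - q ^ (n + 1)) :=
  prod_range_succ _ _

theorem gaussBinom_mul_qPochhammer {R : Type*} [CommRing R] (q : R) (k l : ℕ) :
    gaussBinom q (k + l) k * (qPochhammer q k * qPochhammer q l) = qPochhammer q (k + l) := by
  induction k generalizing l with
  | zero => simp [qPochhammer]
  | succ k ihk =>
    induction l with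
    | zero =>
      have ih := ihk 0
      simp only [add_zero] at ih ⊢
      rw [gaussBinom_succ_succ, gaussBinom_eq_zero_of_lt q k.lt_succ_self, qPochhammer_succ]
      linear_combination (1 - q ^ (k + 1)) * ih
    | succ l ihl =>
      have ih := ihk (l + 1)
      rw [show k + (l + 1) = k + 1 + l by ring] at ih
      rw [← add_assoc, gaussBinom_succ_succ, qPochhammer_succ q (k + 1 + l)]
      simp only [qPochhammer_succ q k, qPochhammer_succ q l] at ih ihl ⊢
      linear_combination (1 - q ^ (k + 1)) * ih + q ^ (k + 1) * (1 - q ^ (l + 1)) * ihl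

lemma prod_range_pow_two_mul_add_one {M : Type*} [CommMonoid M] (q : M) (n : ℕ) :
    ∏ k ∈ range n, q ^ (2 * k + 1) = q ^ n ^ 2 := by
  induction n with
  | zero => simp
  | succ n ih => rw [prod_range_succ, ih, ← pow_add]; congr 1; ring

section Field

variable {K : Type*} [Field K] {q x : K}

/-- The exponents of `q` on the left are the odd integers from `1 - 2 * n` to `2 * n - 1`; pulling
`q ^ (-m) * x` out of the factors with a negative exponent `-m` leaves the second product. -/
lemma prod_range_one_add_sq_pow_mul (hq : q ≠ 0) (hx : x ≠ 0) (n : ℕ) :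
    ∏ i ∈ range (2 * n), (1 + (q ^ 2) ^ i * (q ^ (1 - 2 * n : ℤ) * x)) =
      (q ^ n ^ 2)⁻¹ * x ^ n *
        ((∏ k ∈ range n, (1 + q ^ (2 * k + 1) * x)) *
          ∏ k ∈ range n, (1 + q ^ (2 * k + 1) * x⁻¹)) := by
  have lower_half : ∏ i ∈ range n, (1 + (q ^ 2) ^ i * (q ^ (1 - 2 * n : ℤ) * x)) =
      (q ^ n ^ 2)⁻¹ * x ^ n * ∏ k ∈ range n, (1 + q ^ (2 * k + 1) * x⁻¹) := by
    rw [← prod_range_reflect, ← prod_range_pow_two_mul_add_one, ← prod_inv_distrib,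
      pow_eq_prod_const x n, ← prod_mul_distrib, ← prod_mul_distrib]
    refine prod_congr rfl fun k hk ↦ ?_
    have exponent : (q ^ 2) ^ (n - 1 - k) * q ^ (1 - 2 * n : ℤ) = (q ^ (2 * k + 1))⁻¹ := by
      have hk : k < n := mem_range.1 hk
      rw [← pow_mul, ← zpow_natCast, ← zpow_natCast, ← zpow_neg, ← zpow_add₀ hq]
      congr 1; lia
    rw [← mul_assoc, exponent]
    field_simp
    ring
  have upper_half : ∏ k ∈ range n, (1 + (q ^ 2) ^ (n + k) * (q ^ (1 - 2 * n : ℤ) * x)) =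
      ∏ k ∈ range n, (1 + q ^ (2 * k + 1) * x) := by
    refine prod_congr rfl fun k _ ↦ ?_
    have exponent : (q ^ 2) ^ (n + k) * q ^ (1 - 2 * n : ℤ) = q ^ (2 * k + 1) := by
      rw [← pow_mul, ← zpow_natCast, ← zpow_natCast, ← zpow_add₀ hq]
      congr 1; push_cast; ring
    rw [← mul_assoc, exponent]
  rw [two_mul n, prod_range_add, lower_half, upper_half]
  ring

theorem prod_mul_prod_eq_sum_gaussBinom (hq : q ≠ 0) (hx : x ≠ 0) (n : ℕ) :
    (∏ k ∈ range n, (1 + q ^ (2 * k + 1) * x)) * ∏ k ∈ range n, (1 + q ^ (2 * k + 1) * x⁻¹) =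
      ∑ j ∈ Icc (-n : ℤ) n, gaussBinom (q ^ 2) (2 * n) (n + j).toNat * (q ^ j ^ 2 * x ^ j) := by
  have term_eq (k : ℕ) : (q ^ 2) ^ k.choose 2 * (q ^ (1 - 2 * n : ℤ) * x) ^ k =
      (q ^ n ^ 2)⁻¹ * x ^ n * (q ^ (k - n : ℤ) ^ 2 * x ^ (k - n : ℤ)) := by
    have exponent : (2 * k.choose 2 : ℕ) + (1 - 2 * n : ℤ) * k = -(n ^ 2 : ℕ) + (k - n) ^ 2 := by
      rw [Nat.choose_two_right, Nat.mul_div_cancel' k.even_mul_pred_self.two_dvd]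
      cases k <;> push_cast [Nat.add_sub_cancel] <;> ring
    rw [mul_pow, ← mul_assoc, ← pow_mul, ← zpow_natCast q, ← zpow_natCast (q ^ _), ← zpow_mul,
      ← zpow_add₀ hq, exponent, zpow_add₀ hq, zpow_neg, zpow_natCast, zpow_sub₀ hx]
    simp only [zpow_natCast]
    field_simp
  have hc : (q ^ n ^ 2)⁻¹ * x ^ n ≠ 0 := by simp [hq, hx]
  apply mul_left_cancel₀ hc
  rw [← prod_range_one_add_sq_pow_mul hq hx, prod_one_add_pow_mul_eq_sum_gaussBinom, mul_sum]
  refine sum_nbij' (fun k : ℕ ↦ (k - n : ℤ)) (fun j ↦ (n + j).toNat)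
    (fun k hk ↦ ?_) (fun j hj ↦ ?_) (fun k _ ↦ ?_) (fun j hj ↦ ?_) (fun k _ ↦ ?_)
  · simp only [mem_range, mem_Icc] at hk ⊢; lia
  · simp only [mem_range, mem_Icc] at hj ⊢; lia
  · simp
  · simp only [mem_Icc] at hj; lia
  · rw [mul_right_comm, term_eq, add_sub_cancel, Int.toNat_natCast]
    ring

end Field
end GaussianBinomial

section QSeriesLimits

section NormedField

variable {K : Type*} [NormedField K] {q : K}

lemma norm_sq_lt_one (hq : ‖q‖ < 1) : ‖q ^ 2‖ < 1 := by
  rw [norm_pow]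
  exact pow_lt_one₀ (norm_nonneg q) hq two_ne_zero

lemma summable_norm_neg_pow_succ (hq : ‖q‖ < 1) : Summable fun i : ℕ ↦ ‖-q ^ (i + 1)‖ := by
  simpa only [norm_neg, norm_pow] using
    (summable_nat_add_iff 1).2 (summable_geometric_of_lt_one (norm_nonneg q) hq)

lemma one_sub_pow_succ_ne_zero (hq : ‖q‖ < 1) (i : ℕ) : 1 - q ^ (i + 1) ≠ 0 := fun h ↦ by
  have := pow_lt_one₀ (norm_nonneg q) hq i.succ_ne_zero
  rw [← norm_pow, ← sub_eq_zero.1 h, norm_one] at this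
  exact this.false

lemma qPochhammer_ne_zero (hq : ‖q‖ < 1) (n : ℕ) : qPochhammer q n ≠ 0 :=
  Finset.prod_ne_zero_iff.2 fun i _ ↦ one_sub_pow_succ_ne_zero hq i

lemma gaussBinom_add_eq_div (hq : ‖q‖ < 1) (k l : ℕ) :
    gaussBinom q (k + l) k = qPochhammer q (k + l) / (qPochhammer q k * qPochhammer q l) :=
  eq_div_of_mul_eq (mul_ne_zero (qPochhammer_ne_zero hq k) (qPochhammer_ne_zero hq l))
    (gaussBinom_mul_qPochhammer q k l)

lemma summable_norm_pow_two_mul_add_one_mul (hq : ‖q‖ < 1) (x : K) :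
    Summable fun k : ℕ ↦ ‖q ^ (2 * k + 1) * x‖ := by
  have hgeom := summable_geometric_of_lt_one (norm_nonneg _) (norm_sq_lt_one hq)
  refine (hgeom.mul_right ‖q * x‖).congr fun k ↦ ?_
  rw [← norm_pow, ← norm_mul, ← pow_mul, pow_succ, mul_assoc]

end NormedField

section CompleteNormedField

variable {K : Type*} [NormedField K] [CompleteSpace K] {q : K}

lemma tprod_one_sub_pow_ne_zero (hq : ‖q‖ < 1) : ∏' i : ℕ, (1 - q ^ (i + 1)) ≠ 0 := by
  simp only [sub_eq_add_neg]
  exact tprod_one_add_ne_zero_of_summable (f := fun i ↦ -q ^ (i + 1))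
    (fun i ↦ by simpa only [sub_eq_add_neg] using one_sub_pow_succ_ne_zero hq i)
    (summable_norm_neg_pow_succ hq)

lemma tendsto_qPochhammer (hq : ‖q‖ < 1) :
    Tendsto (qPochhammer q) atTop (𝓝 (∏' i : ℕ, (1 - q ^ (i + 1)))) := by
  have hprod := (multipliable_one_add_of_summable (f := fun i ↦ -q ^ (i + 1))
    (summable_norm_neg_pow_succ hq)).hasProd
  simp only [← sub_eq_add_neg] at hprod
  exact hprod.tendsto_prod_nat

lemma tendsto_gaussBinom_add {ι : Type*} {F : Filter ι} {k l : ι → ℕ} (hq : ‖q‖ < 1)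
    (hk : Tendsto k F atTop) (hl : Tendsto l F atTop) :
    Tendsto (fun i ↦ gaussBinom q (k i + l i) (k i)) F
      (𝓝 (∏' i : ℕ, (1 - q ^ (i + 1)))⁻¹) := by
  have hP := tendsto_qPochhammer hq
  have hP₀ := tprod_one_sub_pow_ne_zero hq
  have hdiv := (hP.comp (hk.atTop_add_atTop hl)).div ((hP.comp hk).mul (hP.comp hl))
    (mul_ne_zero hP₀ hP₀)
  rw [div_mul_cancel_left₀ hP₀] at hdiv
  exact hdiv.congr fun i ↦ (gaussBinom_add_eq_div hq _ _).symm

lemma exists_norm_gaussBinom_le (hq : ‖q‖ < 1) : ∃ B : ℝ, ∀ n k, ‖gaussBinom q n k‖ ≤ B := by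
  have hP := tendsto_qPochhammer hq
  obtain ⟨B, hB⟩ := hP.norm.bddAbove_range
  obtain ⟨C, hC⟩ := (hP.inv₀ (tprod_one_sub_pow_ne_zero hq)).norm.bddAbove_range
  have norm_le (n : ℕ) : ‖qPochhammer q n‖ ≤ B := hB ⟨n, rfl⟩
  have norm_inv_le (n : ℕ) : ‖(qPochhammer q n)⁻¹‖ ≤ C := hC ⟨n, rfl⟩
  have hB₀ : 0 ≤ B := (norm_nonneg _).trans (norm_le 0)
  have hC₀ : 0 ≤ C := (norm_nonneg _).trans (norm_inv_le 0)
  refine ⟨B * (C * C), fun n k ↦ ?_⟩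
  obtain hnk | hkn := lt_or_ge n k
  · rw [gaussBinom_eq_zero_of_lt q hnk, norm_zero]
    positivity
  · obtain ⟨l, rfl⟩ := Nat.exists_eq_add_of_le hkn
    rw [gaussBinom_add_eq_div hq, div_eq_mul_inv, mul_inv, norm_mul, norm_mul]
    gcongr
    exacts [norm_le _, norm_inv_le _, norm_inv_le _]

lemma tendsto_prod_one_add_pow_mul (hq : ‖q‖ < 1) (x : K) :
    Tendsto (fun n ↦ ∏ k ∈ Finset.range n, (1 + q ^ (2 * k + 1) * x)) atTop
      (𝓝 (∏' k : ℕ, (1 + q ^ (2 * k + 1) * x))) :=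
  (multipliable_one_add_of_summable
    (summable_norm_pow_two_mul_add_one_mul hq x)).hasProd.tendsto_prod_nat

lemma tendsto_sum_gaussBinom_mul {f : ℤ → K} (hq : ‖q‖ < 1) (hf : Summable (‖f ·‖)) :
    Tendsto (fun n : ℕ ↦ ∑ j ∈ Finset.Icc (-n : ℤ) n, gaussBinom q (2 * n) (n + j).toNat * f j)
      atTop (𝓝 ((∏' i : ℕ, (1 - q ^ (i + 1)))⁻¹ * ∑' j, f j)) := by
  obtain ⟨B, hB⟩ := exists_norm_gaussBinom_le hq
  simp_rw [sum_eq_tsum_indicator _ (Finset.Icc _ _), ← tsum_mul_left]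
  refine tendsto_tsum_of_dominated_convergence (bound := fun j ↦ B * ‖f j‖) (hf.mul_left B)
    (fun j ↦ ?_) (.of_forall fun n j ↦ ?_)
  · have htop (i : ℤ) : Tendsto (fun n : ℕ ↦ (n + i).toNat) atTop atTop := by
      refine tendsto_atTop.2 fun b ↦ ?_
      filter_upwards [eventually_ge_atTop (b + i.natAbs)] with n hn
      lia
    refine ((tendsto_gaussBinom_add hq (htop j) (htop (-j))).mul_const (f j)).congr' ?_
    filter_upwards [eventually_ge_atTop j.natAbs] with n hn
    rw [Set.indicator_of_mem (by simp only [Finset.coe_Icc, Set.mem_Icc]; lia),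
      show (n + j).toNat + (n + -j).toNat = 2 * n by lia]
  · refine (norm_indicator_le_norm_self _ _).trans ?_
    rw [norm_mul]
    gcongr
    exact hB _ _

end CompleteNormedField

end QSeriesLimits

section TripleProduct

open Function.Periodic

variable {q x z τ : ℂ}

lemma jacobiTheta₂_term_eq_qParam (n : ℤ) (z τ : ℂ) :
    jacobiTheta₂_term n z τ = qParam 2 τ ^ n ^ 2 * qParam 1 z ^ n := by
  rw [jacobiTheta₂_term, qParam, qParam, ← exp_int_mul, ← exp_int_mul, ← exp_add]
  congr 1
  push_cast
  ring

lemma summable_zpow_sq_mul_zpow (hq₀ : q ≠ 0) (hq : ‖q‖ < 1) (hx : x ≠ 0) :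
    Summable fun n : ℤ ↦ q ^ n ^ 2 * x ^ n := by
  have him : 0 < (invQParam 2 q).im := by
    rw [im_invQParam]
    exact mul_pos_of_neg_of_neg (div_neg_of_neg_of_pos (by norm_num) (by positivity))
      (Real.log_neg (norm_pos_iff.2 hq₀) hq)
  simpa only [jacobiTheta₂_term_eq_qParam, qParam_right_inv two_ne_zero hq₀,
    qParam_right_inv one_ne_zero hx] using
    (summable_jacobiTheta₂_term_iff (invQParam 1 x) _).2 him

theorem jacobi_triple_product (hq₀ : q ≠ 0) (hq : ‖q‖ < 1) (hx : x ≠ 0) :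
    ∑' n : ℤ, q ^ n ^ 2 * x ^ n =
      (∏' k : ℕ, (1 - (q ^ 2) ^ (k + 1))) *
        ((∏' k : ℕ, (1 + q ^ (2 * k + 1) * x)) * ∏' k : ℕ, (1 + q ^ (2 * k + 1) * x⁻¹)) := by
  have hsum := tendsto_sum_gaussBinom_mul (norm_sq_lt_one hq)
    (summable_zpow_sq_mul_zpow hq₀ hq hx).norm
  have hprod := (tendsto_prod_one_add_pow_mul hq x).mul (tendsto_prod_one_add_pow_mul hq x⁻¹)
  simp only [prod_mul_prod_eq_sum_gaussBinom hq₀ hx] at hprod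
  rw [tendsto_nhds_unique hprod hsum,
    mul_inv_cancel_left₀ (tprod_one_sub_pow_ne_zero (norm_sq_lt_one hq))]

theorem tsum_zpow_sq_mul_zpow_ne_zero (hq₀ : q ≠ 0) (hq : ‖q‖ < 1) (hx : x ≠ 0)
    (hpos : ∀ k : ℕ, 1 + q ^ (2 * k + 1) * x ≠ 0)
    (hneg : ∀ k : ℕ, 1 + q ^ (2 * k + 1) * x⁻¹ ≠ 0) :
    ∑' n : ℤ, q ^ n ^ 2 * x ^ n ≠ 0 := by
  rw [jacobi_triple_product hq₀ hq hx]
  exact mul_ne_zero (tprod_one_sub_pow_ne_zero (norm_sq_lt_one hq)) (mul_ne_zero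
    (tprod_one_add_ne_zero_of_summable hpos (summable_norm_pow_two_mul_add_one_mul hq _))
    (tprod_one_add_ne_zero_of_summable hneg (summable_norm_pow_two_mul_add_one_mul hq _)))

lemma exists_eq_of_one_add_qParam_pow_mul_eq_zero {k : ℕ}
    (h : 1 + qParam 2 τ ^ (2 * k + 1) * qParam 1 z = 0) :
    ∃ a : ℤ, z = (a + 1 / 2) - (k + 1 / 2) * τ := by
  have hexp : cexp (2 * π * I * (z + (k + 1 / 2) * τ)) = cexp (π * I) := by
    rw [exp_pi_mul_I, ← add_eq_zero_iff_eq_neg', ← h, qParam, qParam, ← exp_nat_mul, ← exp_add]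
    congr 2
    push_cast
    ring
  obtain ⟨a, ha⟩ := exp_eq_exp_iff_exists_int.1 hexp
  refine ⟨a, mul_left_cancel₀ two_pi_I_ne_zero ?_⟩
  linear_combination ha

theorem jacobiTheta₂_ne_zero (hτ : 0 < τ.im)
    (hz : ∀ a b : ℤ, z ≠ (a + 1 / 2) + (b + 1 / 2) * τ) : jacobiTheta₂ z τ ≠ 0 := by
  simp only [jacobiTheta₂, jacobiTheta₂_term_eq_qParam]
  refine tsum_zpow_sq_mul_zpow_ne_zero (qParam_ne_zero τ) (norm_qParam_lt_one two_pos hτ)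
    (qParam_ne_zero z) (fun k h ↦ ?_) (fun k h ↦ ?_)
  · obtain ⟨a, ha⟩ := exists_eq_of_one_add_qParam_pow_mul_eq_zero h
    apply hz a (-k - 1)
    rw [ha]; push_cast; ring
  · have hinv : (qParam 1 z)⁻¹ = qParam 1 (-z) := by
      rw [qParam, qParam, ← exp_neg, mul_neg, neg_div]
    rw [hinv] at h
    obtain ⟨a, ha⟩ := exists_eq_of_one_add_qParam_pow_mul_eq_zero h
    apply hz (-a - 1) k
    push_cast
    linear_combination -ha

end TripleProduct

section HeatEquation

/-- The series `∑ (2πin)ᵏ exp(2πinz + πin²τ)`, i.e. the `k`-th derivative in `z` of Mathlib's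
`jacobiTheta₂`. Writing all of them as series makes `∂_z` and `∂_τ` commute by construction. -/
noncomputable def jacobiTheta₂Moment (k : ℕ) (z τ : ℂ) : ℂ :=
  ∑' n : ℤ, (2 * π * I * n) ^ k * jacobiTheta₂_term n z τ

lemma jacobiTheta₂Moment_zero (z τ : ℂ) : jacobiTheta₂Moment 0 z τ = jacobiTheta₂ z τ := by
  simp only [jacobiTheta₂Moment, pow_zero, one_mul, jacobiTheta₂]

lemma hasDerivAt_jacobiTheta₂_term_fst (n : ℤ) (z τ : ℂ) :
    HasDerivAt (jacobiTheta₂_term n · τ) (2 * π * I * n * jacobiTheta₂_term n z τ) z := by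
  have h := (((hasDerivAt_id z).const_mul (2 * π * I * n)).add_const (π * I * n ^ 2 * τ)).cexp
  exact h.congr_deriv (by simp only [jacobiTheta₂_term, id]; ring)

lemma hasDerivAt_jacobiTheta₂_term_snd (n : ℤ) (z τ : ℂ) :
    HasDerivAt (jacobiTheta₂_term n z) (π * I * n ^ 2 * jacobiTheta₂_term n z τ) τ := by
  have h := (((hasDerivAt_id τ).const_mul (π * I * n ^ 2)).const_add (2 * π * I * n * z)).cexp
  exact h.congr_deriv (by simp only [jacobiTheta₂_term, id]; ring)

lemma hasDerivAt_tsum_of_summable_norm {ι : Type*} {F : ι → ℂ → ℂ} {F' : ι → ℂ} {u : ι → ℝ}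
    {U : Set ℂ} {z : ℂ} (hu : Summable u) (hU : IsOpen U) (hF : ∀ i, Differentiable ℂ (F i))
    (hF_le : ∀ i, ∀ w ∈ U, ‖F i w‖ ≤ u i) (hz : z ∈ U) (hF' : ∀ i, HasDerivAt (F i) (F' i) z) :
    HasDerivAt (fun w ↦ ∑' i, F i w) (∑' i, F' i) z := by
  have hdiff := differentiableOn_tsum_of_summable_norm hu (fun i ↦ (hF i).differentiableOn) hU hF_le
  have hsum := hasSum_deriv_of_summable_norm hu (fun i ↦ (hF i).differentiableOn) hU hF_le hz
  simp only [fun i ↦ (hF' i).deriv] at hsum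
  rw [hsum.tsum_eq]
  exact (hdiff.differentiableAt (hU.mem_nhds hz)).hasDerivAt

lemma norm_pow_mul_jacobiTheta₂_term_le {S T : ℝ} (hT : 0 < T) {z τ : ℂ} (hz : |z.im| ≤ S)
    (hτ : T ≤ τ.im) (k : ℕ) (n : ℤ) :
    ‖(2 * π * I * n) ^ k * jacobiTheta₂_term n z τ‖ ≤
      (2 * π) ^ k * (|n| ^ k * Real.exp (-π * (T * n ^ 2 - 2 * S * |n|))) := by
  have hnorm : ‖(2 * π * I * n : ℂ)‖ = 2 * π * |n| := by
    simp [abs_of_pos Real.pi_pos]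
  rw [norm_mul, norm_pow, hnorm, mul_pow, mul_assoc]
  gcongr
  exact norm_jacobiTheta₂_term_le hT hz hτ n

lemma hasDerivAt_jacobiTheta₂Moment_fst (k : ℕ) (z : ℂ) {τ : ℂ} (hτ : 0 < τ.im) :
    HasDerivAt (jacobiTheta₂Moment k · τ) (jacobiTheta₂Moment (k + 1) z τ) z := by
  obtain ⟨S, hS⟩ := exists_gt |z.im|
  have hderiv (n : ℤ) (w : ℂ) : HasDerivAt (fun w ↦ (2 * π * I * n) ^ k * jacobiTheta₂_term n w τ)
      ((2 * π * I * n) ^ (k + 1) * jacobiTheta₂_term n w τ) w := by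
    exact ((hasDerivAt_jacobiTheta₂_term_fst n w τ).const_mul _).congr_deriv (by ring)
  exact hasDerivAt_tsum_of_summable_norm (U := {w | |w.im| < S})
    ((summable_pow_mul_jacobiTheta₂_term_bound S hτ k).mul_left _)
    (isOpen_lt continuous_im.abs continuous_const) (fun n w ↦ (hderiv n w).differentiableAt)
    (fun n w hw ↦ norm_pow_mul_jacobiTheta₂_term_le hτ (le_of_lt hw) le_rfl k n) hS
    (fun n ↦ hderiv n z)

lemma hasDerivAt_jacobiTheta₂Moment_snd (k : ℕ) (z : ℂ) {τ : ℂ} (hτ : 0 < τ.im) :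
    HasDerivAt (jacobiTheta₂Moment k z) (jacobiTheta₂Moment (k + 2) z τ / (4 * π * I)) τ := by
  obtain ⟨T, hT, hTτ⟩ := exists_between hτ
  have hderiv (n : ℤ) (w : ℂ) : HasDerivAt (fun w ↦ (2 * π * I * n) ^ k * jacobiTheta₂_term n z w)
      ((2 * π * I * n) ^ (k + 2) * jacobiTheta₂_term n z w / (4 * π * I)) w := by
    refine ((hasDerivAt_jacobiTheta₂_term_snd n z w).const_mul _).congr_deriv ?_
    field_simp
    ring
  rw [jacobiTheta₂Moment, ← tsum_div_const]
  exact hasDerivAt_tsum_of_summable_norm (U := {w | T < w.im})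
    ((summable_pow_mul_jacobiTheta₂_term_bound |z.im| hT k).mul_left _)
    (isOpen_lt continuous_const continuous_im) (fun n w ↦ (hderiv n w).differentiableAt)
    (fun n w hw ↦ norm_pow_mul_jacobiTheta₂_term_le hT le_rfl (le_of_lt hw) k n) hTτ
    (fun n ↦ hderiv n τ)

end HeatEquation

section Theta1

lemma hasSum_int_even_add_odd {M : Type*} [AddCommMonoid M] [TopologicalSpace M]
    [ContinuousAdd M] {f : ℤ → M} {a b : M} (he : HasSum (fun k ↦ f (2 * k)) a)
    (ho : HasSum (fun k ↦ f (2 * k + 1)) b) : HasSum f (a + b) := by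
  have hinj := mul_right_injective₀ (two_ne_zero' ℤ)
  replace ho := ((add_left_injective 1).comp hinj).hasSum_range_iff.2 ho
  refine (hinj.hasSum_range_iff.2 he).add_isCompl ?_ ho
  simpa [Function.comp_def, even_iff_exists_two_mul, Odd, Set.range, eq_comm] using
    Int.isCompl_even_odd

variable {t τ : ℂ}

/-- The `k`-th derivative in `t` of `ϑ₁`. The frequencies `j + 1/2` in the series of `ϑ₁` are halves
of the odd integers, so `-ϑ₁` is a rescaled `jacobiTheta₂` minus its even part, which is again a
`jacobiTheta₂`. -/
noncomputable def theta1Deriv (k : ℕ) (t τ : ℂ) : ℂ :=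
  jacobiTheta₂Moment k (t + 1 / 2) τ -
    (1 / 2) ^ k * jacobiTheta₂Moment k ((t + 1 / 2) / 2) (τ / 4)

lemma theta1_eq_theta1Deriv_zero (t : ℂ) (hτ : 0 < τ.im) : theta1 t τ = theta1Deriv 0 t τ := by
  have hτ4 : 0 < (τ / 4).im := by simpa using hτ
  set f : ℤ → ℂ := fun n ↦ jacobiTheta₂_term n ((t + 1 / 2) / 2) (τ / 4)
  have hodd : theta1 t τ = -∑' j : ℤ, f (2 * j + 1) := by
    simp only [theta1, f, jacobiTheta₂_term]
    congr! 4 with j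
    push_cast
    ring
  have heven : jacobiTheta₂ (t + 1 / 2) τ = ∑' j : ℤ, f (2 * j) := by
    simp only [jacobiTheta₂, f, jacobiTheta₂_term]
    congr! 3 with j
    push_cast
    ring
  have hf : Summable f := (summable_jacobiTheta₂_term_iff _ _).2 hτ4
  have hsplit := hasSum_int_even_add_odd
    (hf.comp_injective (mul_right_injective₀ (two_ne_zero' ℤ))).hasSum
    (hf.comp_injective ((add_left_injective 1).comp (mul_right_injective₀ (two_ne_zero' ℤ)))).hasSum
  have htotal : jacobiTheta₂ ((t + 1 / 2) / 2) (τ / 4) =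
      ∑' j : ℤ, f (2 * j) + ∑' j : ℤ, f (2 * j + 1) := hsplit.tsum_eq
  rw [theta1Deriv, pow_zero, one_mul, jacobiTheta₂Moment_zero, jacobiTheta₂Moment_zero, hodd,
    heven, htotal]
  ring

lemma hasDerivAt_theta1Deriv_fst (k : ℕ) (t : ℂ) (hτ : 0 < τ.im) :
    HasDerivAt (theta1Deriv k · τ) (theta1Deriv (k + 1) t τ) t := by
  have hτ4 : 0 < (τ / 4).im := by simpa using hτ
  have hshift : HasDerivAt (fun s : ℂ ↦ s + 1 / 2) 1 t := (hasDerivAt_id t).add_const _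
  refine (((hasDerivAt_jacobiTheta₂Moment_fst k _ hτ).comp t hshift).sub
    (((hasDerivAt_jacobiTheta₂Moment_fst k _ hτ4).comp t (hshift.div_const 2)).const_mul
      ((1 / 2) ^ k))).congr_deriv ?_
  rw [theta1Deriv]
  ring

lemma hasDerivAt_theta1Deriv_snd (k : ℕ) (t : ℂ) (hτ : 0 < τ.im) :
    HasDerivAt (theta1Deriv k t) (theta1Deriv (k + 2) t τ / (4 * π * I)) τ := by
  have hτ4 : 0 < (τ / 4).im := by simpa using hτ
  refine ((hasDerivAt_jacobiTheta₂Moment_snd k _ hτ).sub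
    (((hasDerivAt_jacobiTheta₂Moment_snd k _ hτ4).comp τ
      ((hasDerivAt_id τ).div_const 4)).const_mul ((1 / 2) ^ k))).congr_deriv ?_
  rw [theta1Deriv]
  ring

lemma theta1_eq_exp_mul_jacobiTheta₂ (t τ : ℂ) :
    theta1 t τ = -(cexp (π * I * (τ / 4 + t + 1 / 2)) * jacobiTheta₂ (t + 1 / 2 + τ / 2) τ) := by
  rw [theta1, jacobiTheta₂, ← tsum_mul_left]
  congr! 3 with j
  rw [jacobiTheta₂_term, ← exp_add]
  congr 1
  ring

theorem theta1_ne_zero (hτ : 0 < τ.im) (ht : ¬ inLattice τ t) : theta1 t τ ≠ 0 := by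
  rw [theta1_eq_exp_mul_jacobiTheta₂]
  refine neg_ne_zero.2 (mul_ne_zero (exp_ne_zero _) (jacobiTheta₂_ne_zero hτ fun a b h ↦ ht ?_))
  exact ⟨a, b, by linear_combination h⟩

lemma rhoF_eq_div (t : ℂ) (hτ : 0 < τ.im) :
    rhoF t τ = theta1Deriv 1 t τ / theta1Deriv 0 t τ := by
  have htheta : (fun s ↦ theta1 s τ) = (theta1Deriv 0 · τ) :=
    funext fun s ↦ theta1_eq_theta1Deriv_zero s hτ
  rw [rhoF, theta1', htheta, (hasDerivAt_theta1Deriv_fst 0 t hτ).deriv,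
    theta1_eq_theta1Deriv_zero t hτ]

lemma rhoF_sq_add_deriv_eq_div (hτ : 0 < τ.im) (h₀ : theta1Deriv 0 t τ ≠ 0) :
    rhoF t τ ^ 2 + deriv (rhoF · τ) t = theta1Deriv 2 t τ / theta1Deriv 0 t τ := by
  have hrho : (rhoF · τ) = fun s ↦ theta1Deriv 1 s τ / theta1Deriv 0 s τ :=
    funext fun s ↦ rhoF_eq_div s hτ
  rw [hrho, rhoF_eq_div t hτ, ((hasDerivAt_theta1Deriv_fst 1 t hτ).fun_div
    (hasDerivAt_theta1Deriv_fst 0 t hτ) h₀).deriv]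
  field_simp
  ring

end Theta1

/-- `4πi·∂_τ ρ(t,τ) = ∂_t(ρ(t,τ)² + ∂_t ρ(t,τ))`
(closedness of the Cartan part `η` of the KZB connection form). -/
theorem rho_heat_identity (τ t : ℂ) (hτ : 0 < τ.im) (ht : ¬ inLattice τ t) :
    4 * (Real.pi : ℂ) * Complex.I * deriv (fun τ' => rhoF t τ') τ =
      deriv (fun t' => rhoF t' τ ^ 2 + deriv (fun u => rhoF u τ) t') t := by
  have h₀ : theta1Deriv 0 t τ ≠ 0 := theta1_eq_theta1Deriv_zero t hτ ▸ theta1_ne_zero hτ ht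
  have hleft : (fun τ' ↦ rhoF t τ') =ᶠ[𝓝 τ] fun τ' ↦ theta1Deriv 1 t τ' / theta1Deriv 0 t τ' := by
    filter_upwards [continuous_im.continuousAt.eventually_const_lt hτ] with τ' hτ'
    exact rhoF_eq_div t hτ'
  have hright : (fun t' ↦ rhoF t' τ ^ 2 + deriv (fun u ↦ rhoF u τ) t') =ᶠ[𝓝 t]
      fun t' ↦ theta1Deriv 2 t' τ / theta1Deriv 0 t' τ := by
    filter_upwards [(hasDerivAt_theta1Deriv_fst 0 t hτ).continuousAt.eventually_ne h₀] with t' h₀'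
    exact rhoF_sq_add_deriv_eq_div hτ h₀'
  rw [hleft.deriv_eq, hright.deriv_eq,
    ((hasDerivAt_theta1Deriv_snd 1 t hτ).fun_div (hasDerivAt_theta1Deriv_snd 0 t hτ) h₀).deriv,
    ((hasDerivAt_theta1Deriv_fst 2 t hτ).fun_div (hasDerivAt_theta1Deriv_fst 0 t hτ) h₀).deriv]
  field_simp
end

section
/- Let r ≥ 1, M ≥ 1, κ ∈ ℂ∖{0}, and μ_1,…,μ_M ∈ ℂ^r with ∑_i μ_i = 0. Let U ⊆ ℂ^M × H₊ be an open set (coordinates (t_1,…,t_M,τ)) on which t_i − t_j ∉ ℤ+τℤ for all i < j, and for each i < j let L_{ij} : U → ℂ be a holomorphic function with exp(L_{ij}(t,τ)) = E(t_i−t_j,τ) (a branch of log E(t_i−t_j,τ)). Let g : ℂ^r × H₊ → ℂ be holomorphic and satisfy the heat equation 4πiκ·∂_τ g(λ,τ) = ∑_{ν=1}^r ∂²_{λ_ν} g(λ,τ). Define u(t,λ,τ) = exp( ∑_{i<j} (⟨μ_i,μ_j⟩/κ) L_{ij}(t,τ) ) · g( λ − κ^{−1}∑_{i=1}^M t_i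 μ_i , τ ). Then u is horizontal for the abelian KZB connection, i.e. for every i ∈ {1,…,M}: ∂_{t_i} u + κ^{−1} ∑_{ν=1}^r μ_{i,ν} ∂_{λ_ν} u = ( ∑_{j≠i} (⟨μ_i,μ_j⟩/κ) ρ(t_i − t_j, τ) ) · u, and ∂_τ u − (4πiκ)^{−1} ∑_{ν=1}^r ∂²_{λ_ν} u = ( ∑_{i<j} (⟨μ_i,μ_j⟩/κ) ∂_τ L_{ij}(t,τ) ) · u. (This is the description of the horizontal sections of the local system 𝓛_μ: they are of the form Φ_μ(t,τ)·g(λ − κ^{−1}∑μ_i t_i, τ) with Φ_μ = ∏_{i<j} E(t_i−t_j,τ)^{⟨μ_i,μ_j⟩/κ} and g a solution of the heat equation.) -/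
open Complex Filter Topology MeasureTheory

noncomputable section

/-- The candidate horizontal section
`u(t,λ,τ) = exp(∑_{i<j} (⟨μ_i,μ_j⟩/κ) L_{ij}(t,τ)) · g(λ − κ⁻¹∑_i t_i μ_i, τ)`,
where `p = (t,τ)`. -/
def uSec {r M : ℕ} (κ : ℂ) (μ : Fin M → Fin r → ℂ)
    (L : Fin M → Fin M → ((Fin M → ℂ) × ℂ) → ℂ)
    (g : (Fin r → ℂ) → ℂ → ℂ) (p : (Fin M → ℂ) × ℂ) (lam : Fin r → ℂ) : ℂ :=
  Complex.exp (∑ i : Fin M, ∑ j ∈ Finset.univ.filter (fun j : Fin M => i < j),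
      ((∑ ν : Fin r, μ i ν * μ j ν) / κ) * L i j p) *
  g (fun ν => lam ν - κ⁻¹ * ∑ i : Fin M, p.1 i * μ i ν) p.2

end

/-!
Write `u = exp S(t, τ) · g(λ - A t, τ)`, where `S` is a branch of `log Φ_μ` and `A` is the linear
map `t ↦ κ⁻¹ ∑ tᵢ μᵢ`. Since `λ - A t` is constant along `(eᵢ, A eᵢ) = (eᵢ, κ⁻¹ μᵢ)`, the operator
`∂_{tᵢ} + κ⁻¹ ⟨μᵢ, ∂_λ⟩` only differentiates `exp S`; as `∂_t log E = ρ` and `ρ` is odd, it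
multiplies `u` by `∂_{tᵢ} S = ∑_{j ≠ i} (⟨μᵢ, μⱼ⟩ / κ) ρ(tᵢ - tⱼ)`. Likewise the heat operator
commutes with translations in `λ` and kills `g`, so that only `∂_τ S` survives.
-/

section CoordinateDerivatives

variable {𝕜 ι : Type*} [NontriviallyNormedField 𝕜] [DecidableEq ι]

theorem deriv_comp_update [Finite ι] {f : (ι → 𝕜) → 𝕜} {x : ι → 𝕜}
    (hf : DifferentiableAt 𝕜 f x) (i : ι) :
    deriv (fun z => f (Function.update x i z)) (x i) = fderiv 𝕜 f x (Pi.single i 1) := by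
  cases nonempty_fintype ι
  exact (hf.hasFDerivAt.comp_hasDerivAt_of_eq (x i) (hasDerivAt_update x i (x i))
    (Function.update_eq_self i x).symm).deriv

variable [Fintype ι]

theorem sum_mul_deriv_comp_update {f : (ι → 𝕜) → 𝕜} {x : ι → 𝕜} (hf : DifferentiableAt 𝕜 f x)
    (v : ι → 𝕜) :
    ∑ i, v i * deriv (fun z => f (Function.update x i z)) (x i) = fderiv 𝕜 f x v := by
  conv_rhs => rw [pi_eq_sum_univ' v]
  simp only [deriv_comp_update hf, map_sum, map_smul, smul_eq_mul]

/-- The sum of the pure second partial derivatives, each computed along a coordinate line. Over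
`ℂ` this is the holomorphic Laplacian of the heat equation. -/
noncomputable def coordLaplacian (f : (ι → 𝕜) → 𝕜) (x : ι → 𝕜) : 𝕜 :=
  ∑ ν, deriv (deriv fun z => f (Function.update x ν z)) (x ν)

theorem coordLaplacian_const_mul (c : 𝕜) (f : (ι → 𝕜) → 𝕜) (x : ι → 𝕜) :
    coordLaplacian (fun y => c * f y) x = c * coordLaplacian f x := by
  simp only [coordLaplacian, deriv_const_mul_field', deriv_const_mul_field, Finset.mul_sum]

theorem coordLaplacian_comp_sub (f : (ι → 𝕜) → 𝕜) (v x : ι → 𝕜) :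
    coordLaplacian (fun y => f (y - v)) x = coordLaplacian f (x - v) := by
  refine Finset.sum_congr rfl fun ν _ => ?_
  have hline (z : 𝕜) : Function.update x ν z - v = Function.update (x - v) ν (z - v ν) := by
    rw [Function.update_sub, Function.update_eq_self]
  have hderiv : (deriv fun z => f (Function.update x ν z - v)) =
      fun z => deriv (fun w => f (Function.update (x - v) ν w)) (z - v ν) := by
    funext z
    simp only [hline]
    exact deriv_comp_sub_const (f := fun w => f (Function.update (x - v) ν w)) ..
  rw [hderiv, deriv_comp_sub_const, Pi.sub_apply]

end CoordinateDerivatives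

section ExpMul

variable {E F : Type*} [NormedAddCommGroup E] [NormedSpace ℂ E] [NormedAddCommGroup F]
  [NormedSpace ℂ F]

theorem fderiv_eq_of_exp_eventuallyEq {L f : E → ℂ} {x : E} (hL : DifferentiableAt ℂ L x)
    (hf : (fun y => exp (L y)) =ᶠ[𝓝 x] f) : fderiv ℂ L x = (f x)⁻¹ • fderiv ℂ f x := by
  rw [← hf.fderiv_eq, ← hf.eq_of_nhds, hL.hasFDerivAt.cexp.fderiv,
    inv_smul_smul₀ (exp_ne_zero _)]

theorem fderiv_exp_mul_comp_sub_add {S : E → ℂ} {h : F → ℂ} (A : E →L[ℂ] F) {t : E} {x : F}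
    (hS : DifferentiableAt ℂ S t) (hh : DifferentiableAt ℂ h (x - A t)) (v : E) :
    fderiv ℂ (fun t' => exp (S t') * h (x - A t')) t v +
        fderiv ℂ (fun x' => exp (S t) * h (x' - A t)) x (A v) =
      fderiv ℂ S t v * (exp (S t) * h (x - A t)) := by
  have ht : HasFDerivAt (fun t' => h (x - A t')) (-(fderiv ℂ h (x - A t) ∘L A)) t := by
    simpa [Function.comp_def] using hh.hasFDerivAt.comp t (A.hasFDerivAt.const_sub x)
  have hx : HasFDerivAt (fun x' => h (x' - A t)) (fderiv ℂ h (x - A t)) x := by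
    simpa [Function.comp_def] using hh.hasFDerivAt.comp x ((hasFDerivAt_id x).sub_const (A t))
  rw [(hS.hasFDerivAt.cexp.fun_mul ht).fderiv, (hx.const_mul _).fderiv]
  simp only [add_apply, smul_apply, neg_apply, smul_eq_mul, ContinuousLinearMap.comp_apply]
  ring

theorem deriv_exp_mul_sub_coordLaplacian {ι : Type*} [Fintype ι] [DecidableEq ι] {S : ℂ → ℂ}
    {g : (ι → ℂ) → ℂ → ℂ} {x v : ι → ℂ} {τ c : ℂ} (hS : DifferentiableAt ℂ S τ)
    (hg : DifferentiableAt ℂ (g (x - v)) τ) (hc : c ≠ 0)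
    (hheat : c * deriv (g (x - v)) τ = coordLaplacian (g · τ) (x - v)) :
    deriv (fun τ' => exp (S τ') * g (x - v) τ') τ -
        c⁻¹ * coordLaplacian (fun y => exp (S τ) * g (y - v) τ) x =
      deriv S τ * (exp (S τ) * g (x - v) τ) := by
  rw [(hS.hasDerivAt.cexp.fun_mul hg.hasDerivAt).deriv, coordLaplacian_const_mul,
    coordLaplacian_comp_sub (g · τ), ← hheat]
  field_simp
  ring

end ExpMul

theorem sum_sum_lt_mul_single_sub_single {ι R : Type*} [Fintype ι] [LinearOrder ι] [Ring R]
    {w : ι → ι → R} (hw : ∀ a b, w b a = -w a b) (i : ι) :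
    ∑ a, ∑ b with a < b, w a b * ((Pi.single i 1 : ι → R) a - (Pi.single i 1 : ι → R) b) =
      ∑ j with j ≠ i, w i j := by
  have hfst : ∑ a, ∑ b with a < b, w a b * (Pi.single i 1 : ι → R) a = ∑ j with i < j, w i j := by
    simp [Pi.single_apply]
  have hsnd : ∑ a, ∑ b with a < b, w a b * (Pi.single i 1 : ι → R) b = ∑ j with j < i, w j i := by
    simp [Pi.single_apply, Finset.sum_filter]
  have hsplit : ∑ j with j ≠ i, w i j = ∑ j with i < j, w i j + ∑ j with j < i, w i j := by
    rw [← Finset.sum_union (by grind [Finset.disjoint_left]), ← Finset.filter_or]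
    simp only [ne_comm, ne_iff_lt_or_gt]
  simp only [mul_sub, Finset.sum_sub_distrib, hfst, hsnd, hsplit, hw i,
    Finset.sum_neg_distrib, sub_neg_eq_add]

section Theta

theorem theta1_eq_jacobiTheta₂ (t τ : ℂ) :
    theta1 t τ = -(exp (Real.pi * I * (τ / 4 + t + 1 / 2)) *
      jacobiTheta₂ (t + 1 / 2 + τ / 2) τ) := by
  rw [theta1, jacobiTheta₂, ← tsum_mul_left]
  refine congrArg _ (tsum_congr fun j => ?_)
  rw [jacobiTheta₂_term, ← Complex.exp_add]
  ring_nf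

theorem theta1_neg (t τ : ℂ) : theta1 (-t) τ = -theta1 t τ := by
  have hshift : jacobiTheta₂ (t + 1 / 2 + τ / 2) τ =
      exp (-Real.pi * I * (2 * t - 1)) * jacobiTheta₂ (-t + 1 / 2 + τ / 2) τ := by
    rw [← jacobiTheta₂_neg_left (-t + 1 / 2 + τ / 2),
      show t + 1 / 2 + τ / 2 = -(-t + 1 / 2 + τ / 2) + τ + 1 by ring, jacobiTheta₂_add_left,
      jacobiTheta₂_add_left']
    ring_nf
  have hphase : exp (Real.pi * I * (τ / 4 + t + 1 / 2)) * exp (-Real.pi * I * (2 * t - 1)) =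
      -exp (Real.pi * I * (τ / 4 + -t + 1 / 2)) := by
    rw [← exp_add_pi_mul_I, ← Complex.exp_add]
    ring_nf
  rw [theta1_eq_jacobiTheta₂, theta1_eq_jacobiTheta₂, hshift, ← mul_assoc, hphase]
  ring

theorem theta1'_neg (t τ : ℂ) : theta1' (-t) τ = theta1' t τ := by
  have h := deriv_comp_neg (fun s => theta1 s τ) t
  simp only [theta1_neg, deriv.fun_neg, neg_inj] at h
  exact h.symm

theorem rhoF_neg (t τ : ℂ) : rhoF (-t) τ = -rhoF t τ := by
  rw [rhoF, rhoF, theta1'_neg, theta1_neg, div_neg]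

theorem differentiable_theta1 {τ : ℂ} (hτ : 0 < τ.im) : Differentiable ℂ fun t => theta1 t τ := by
  intro t
  simp only [theta1_eq_jacobiTheta₂]
  have hθ := (differentiableAt_jacobiTheta₂_fst (t + 1 / 2 + τ / 2) hτ).comp t
    (f := fun t => t + 1 / 2 + τ / 2) (by fun_prop)
  exact (DifferentiableAt.mul (by fun_prop) hθ).neg

theorem hasDerivAt_EF {t τ : ℂ} (hτ : 0 < τ.im) (hE : EF t τ ≠ 0) :
    HasDerivAt (fun s => EF s τ) (EF t τ * rhoF t τ) t := by
  have hθ : theta1 t τ ≠ 0 := (div_ne_zero_iff.mp hE).1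
  have hlog : EF t τ * rhoF t τ = theta1' t τ / theta1' 0 τ := by
    rw [EF, rhoF]
    field_simp
  rw [hlog]
  exact (differentiable_theta1 hτ t).hasDerivAt.div_const _

theorem fderiv_of_exp_eventuallyEq_EF {E : Type*} [NormedAddCommGroup E] [NormedSpace ℂ E]
    {L : E → ℂ} {t : E} {τ : ℂ} (ℓ : E →L[ℂ] ℂ) (hτ : 0 < τ.im) (hL : DifferentiableAt ℂ L t)
    (hexp : ∀ᶠ s in 𝓝 t, exp (L s) = EF (ℓ s) τ) :
    fderiv ℂ L t = rhoF (ℓ t) τ • ℓ := by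
  have hE : EF (ℓ t) τ ≠ 0 := hexp.self_of_nhds ▸ exp_ne_zero _
  have hEℓ : HasFDerivAt (fun s => EF (ℓ s) τ) ((EF (ℓ t) τ * rhoF (ℓ t) τ) • ℓ) t :=
    (hasDerivAt_EF hτ hE).comp_hasFDerivAt (f := ℓ) t ℓ.hasFDerivAt
  rw [fderiv_eq_of_exp_eventuallyEq hL hexp, hEℓ.fderiv, mul_smul, inv_smul_smul₀ hE]

theorem fderiv_apply_of_exp_eventuallyEq_EF_sub {ι : Type*} [Finite ι] {L : (ι → ℂ) → ℂ}
    {t : ι → ℂ} {τ : ℂ} {a b : ι} (hτ : 0 < τ.im) (hL : DifferentiableAt ℂ L t)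
    (hexp : ∀ᶠ s in 𝓝 t, exp (L s) = EF (s a - s b) τ) (v : ι → ℂ) :
    fderiv ℂ L t v = rhoF (t a - t b) τ * (v a - v b) := by
  cases nonempty_fintype ι
  let diff : (ι → ℂ) →L[ℂ] ℂ := .proj a - .proj b
  exact congrArg (· v) (fderiv_of_exp_eventuallyEq_EF diff hτ hL hexp)

end Theta

section Sections

variable {r M : ℕ} {κ : ℂ} {μ : Fin M → Fin r → ℂ} {L : Fin M → Fin M → ((Fin M → ℂ) × ℂ) → ℂ}
  {g : (Fin r → ℂ) → ℂ → ℂ} {p : (Fin M → ℂ) × ℂ} {lam : Fin r → ℂ}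

/-- The branch `∑_{i<j} (⟨μᵢ, μⱼ⟩ / κ) L_{ij}` of `log Φ_μ` determined by branches `L_{ij}` of
`log E(tᵢ - tⱼ, τ)`. -/
noncomputable def logPhi (κ : ℂ) (μ : Fin M → Fin r → ℂ)
    (L : Fin M → Fin M → ((Fin M → ℂ) × ℂ) → ℂ) (p : (Fin M → ℂ) × ℂ) : ℂ :=
  ∑ i, ∑ j with i < j, ((∑ ν, μ i ν * μ j ν) / κ) * L i j p

/-- The translation `t ↦ κ⁻¹ ∑ tᵢ μᵢ` of the variable `λ`, as a continuous linear map. -/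
noncomputable def weightShift (κ : ℂ) (μ : Fin M → Fin r → ℂ) : (Fin M → ℂ) →L[ℂ] Fin r → ℂ :=
  κ⁻¹ • (Fintype.linearCombination ℂ μ).toContinuousLinearMap

theorem weightShift_single (i : Fin M) : weightShift κ μ (Pi.single i 1) = κ⁻¹ • μ i := by
  simp [weightShift]

theorem uSec_eq (κ : ℂ) (μ : Fin M → Fin r → ℂ) (L : Fin M → Fin M → ((Fin M → ℂ) × ℂ) → ℂ)
    (g : (Fin r → ℂ) → ℂ → ℂ) (p : (Fin M → ℂ) × ℂ) (lam : Fin r → ℂ) :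
    uSec κ μ L g p lam = exp (logPhi κ μ L p) * g (lam - weightShift κ μ p.1) p.2 := by
  have hshift : (fun ν => lam ν - κ⁻¹ * ∑ i, p.1 i * μ i ν) = lam - weightShift κ μ p.1 := by
    ext ν
    simp [weightShift, Fintype.linearCombination_apply]
  rw [uSec, hshift, logPhi]

theorem differentiableAt_logPhi (hL : ∀ i j, i < j → DifferentiableAt ℂ (L i j) p) :
    DifferentiableAt ℂ (logPhi κ μ L) p :=
  DifferentiableAt.fun_sum fun i _ => DifferentiableAt.fun_sum fun j hj =>
    (hL i j (Finset.mem_filter.mp hj).2).const_mul _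

theorem deriv_logPhi_snd (hL : ∀ i j, i < j → DifferentiableAt ℂ (L i j) p) :
    deriv (fun τ => logPhi κ μ L (p.1, τ)) p.2 =
      ∑ i, ∑ j with i < j,
        ((∑ ν, μ i ν * μ j ν) / κ) * deriv (fun τ => L i j (p.1, τ)) p.2 := by
  have hLτ (i j : Fin M) (hij : i < j) : DifferentiableAt ℂ (fun τ => L i j (p.1, τ)) p.2 :=
    (hL i j hij).comp p.2 (f := fun τ => (p.1, τ)) (by fun_prop)
  exact (HasDerivAt.fun_sum fun i _ => HasDerivAt.fun_sum fun j hj =>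
    (hLτ i j (Finset.mem_filter.mp hj).2).hasDerivAt.const_mul _).deriv

theorem fderiv_logPhi_fst_single (hτ : 0 < p.2.im)
    (hL : ∀ i j, i < j → DifferentiableAt ℂ (L i j) p)
    (hexp : ∀ i j, i < j → ∀ᶠ q in 𝓝 p, exp (L i j q) = EF (q.1 i - q.1 j) q.2) (i : Fin M) :
    fderiv ℂ (fun t => logPhi κ μ L (t, p.2)) p.1 (Pi.single i 1) =
      ∑ j with j ≠ i, ((∑ ν, μ i ν * μ j ν) / κ) * rhoF (p.1 i - p.1 j) p.2 := by
  have hLt (a b : Fin M) (hab : a < b) : DifferentiableAt ℂ (fun t => L a b (t, p.2)) p.1 :=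
    (hL a b hab).comp p.1 (f := fun t => (t, p.2)) (by fun_prop)
  have hexpt (a b : Fin M) (hab : a < b) :
      ∀ᶠ t in 𝓝 p.1, exp (L a b (t, p.2)) = EF (t a - t b) p.2 :=
    (show Tendsto (fun t => (t, p.2)) (𝓝 p.1) (𝓝 p) from
      (Continuous.prodMk_left p.2).tendsto p.1).eventually (hexp a b hab)
  have hS : HasFDerivAt (fun t => logPhi κ μ L (t, p.2)) (∑ a, ∑ b with a < b,
      ((∑ ν, μ a ν * μ b ν) / κ) • fderiv ℂ (fun t => L a b (t, p.2)) p.1) p.1 :=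
    HasFDerivAt.fun_sum fun a _ => HasFDerivAt.fun_sum fun b hb =>
      (hLt a b (Finset.mem_filter.mp hb).2).hasFDerivAt.const_mul _
  have hanti (a b : Fin M) : ((∑ ν, μ b ν * μ a ν) / κ) * rhoF (p.1 b - p.1 a) p.2 =
      -(((∑ ν, μ a ν * μ b ν) / κ) * rhoF (p.1 a - p.1 b) p.2) := by
    rw [← neg_sub (p.1 a), rhoF_neg, mul_neg]
    simp only [mul_comm]
  rw [← sum_sum_lt_mul_single_sub_single hanti, hS.fderiv]
  simp only [sum_apply, smul_apply, smul_eq_mul]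
  refine Finset.sum_congr rfl fun a _ => Finset.sum_congr rfl fun b hb => ?_
  have hab : a < b := (Finset.mem_filter.mp hb).2
  rw [fderiv_apply_of_exp_eventuallyEq_EF_sub hτ (hLt a b hab) (hexpt a b hab), mul_assoc]

theorem uSec_transport_eq (hτ : 0 < p.2.im) (hL : ∀ i j, i < j → DifferentiableAt ℂ (L i j) p)
    (hexp : ∀ i j, i < j → ∀ᶠ q in 𝓝 p, exp (L i j q) = EF (q.1 i - q.1 j) q.2)
    (hg : Differentiable ℂ fun x => g x p.2) (i : Fin M) :
    deriv (fun z => uSec κ μ L g (Function.update p.1 i z, p.2) lam) (p.1 i) +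
        κ⁻¹ * ∑ ν, μ i ν * deriv (fun z => uSec κ μ L g p (Function.update lam ν z)) (lam ν) =
      (∑ j with j ≠ i, ((∑ ν, μ i ν * μ j ν) / κ) * rhoF (p.1 i - p.1 j) p.2) *
        uSec κ μ L g p lam := by
  have hS : DifferentiableAt ℂ (fun t => logPhi κ μ L (t, p.2)) p.1 :=
    (differentiableAt_logPhi hL).comp p.1 (f := fun t => (t, p.2)) (by fun_prop)
  have hut : DifferentiableAt ℂ (fun t => uSec κ μ L g (t, p.2) lam) p.1 := by
    simp only [uSec_eq]
    fun_prop
  have hux : DifferentiableAt ℂ (fun x => uSec κ μ L g p x) lam := by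
    simp only [uSec_eq]
    fun_prop
  rw [deriv_comp_update hut, sum_mul_deriv_comp_update hux, ← smul_eq_mul, ← map_smul,
    ← weightShift_single, ← fderiv_logPhi_fst_single hτ hL hexp]
  simp only [uSec_eq]
  exact fderiv_exp_mul_comp_sub_add (weightShift κ μ) hS (hg _) _

theorem uSec_heat_eq (hκ : κ ≠ 0) (hL : ∀ i j, i < j → DifferentiableAt ℂ (L i j) p)
    (hg : ∀ x, DifferentiableAt ℂ (g x) p.2)
    (hheat : ∀ x, 4 * Real.pi * I * κ * deriv (g x) p.2 = coordLaplacian (g · p.2) x) :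
    deriv (fun τ => uSec κ μ L g (p.1, τ) lam) p.2 -
        (4 * Real.pi * I * κ)⁻¹ * coordLaplacian (uSec κ μ L g p) lam =
      (∑ i, ∑ j with i < j,
        ((∑ ν, μ i ν * μ j ν) / κ) * deriv (fun τ => L i j (p.1, τ)) p.2) *
        uSec κ μ L g p lam := by
  have hS : DifferentiableAt ℂ (fun τ => logPhi κ μ L (p.1, τ)) p.2 :=
    (differentiableAt_logPhi hL).comp p.2 (f := fun τ => (p.1, τ)) (by fun_prop)
  have hc : 4 * Real.pi * I * κ ≠ 0 := by simp [hκ, Real.pi_ne_zero]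
  rw [← deriv_logPhi_snd hL, funext (uSec_eq κ μ L g p)]
  simp only [uSec_eq]
  exact deriv_exp_mul_sub_coordLaplacian hS (hg _) hc (hheat _)

end Sections

theorem abelian_KZB_horizontal_sections_general (r M : ℕ)
    (κ : ℂ) (hκ : κ ≠ 0)
    (μ : Fin M → Fin r → ℂ)
    (U : Set ((Fin M → ℂ) × ℂ)) (hUopen : IsOpen U)
    (hUτ : ∀ p ∈ U, 0 < p.2.im)
    (L : Fin M → Fin M → ((Fin M → ℂ) × ℂ) → ℂ)
    (hLdiff : ∀ i j : Fin M, i < j → DifferentiableOn ℂ (L i j) U)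
    (hLexp : ∀ i j : Fin M, i < j → ∀ p ∈ U, Complex.exp (L i j p) = EF (p.1 i - p.1 j) p.2)
    (g : (Fin r → ℂ) → ℂ → ℂ)
    (hg : DifferentiableOn ℂ (fun p : (Fin r → ℂ) × ℂ => g p.1 p.2)
      {p : (Fin r → ℂ) × ℂ | 0 < p.2.im})
    (hheat : ∀ (lam : Fin r → ℂ) (τ : ℂ), 0 < τ.im →
      4 * (Real.pi : ℂ) * Complex.I * κ * deriv (fun τ' => g lam τ') τ =
        ∑ ν : Fin r, deriv (deriv (fun z => g (Function.update lam ν z) τ)) (lam ν)) :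
    ∀ p ∈ U, ∀ (lam : Fin r → ℂ),
      (∀ i : Fin M,
        deriv (fun z => uSec κ μ L g (Function.update p.1 i z, p.2) lam) (p.1 i)
          + κ⁻¹ * ∑ ν : Fin r, μ i ν *
              deriv (fun z => uSec κ μ L g p (Function.update lam ν z)) (lam ν)
        = (∑ j ∈ Finset.univ.filter (fun j : Fin M => j ≠ i),
            ((∑ ν : Fin r, μ i ν * μ j ν) / κ) * rhoF (p.1 i - p.1 j) p.2)
            * uSec κ μ L g p lam) ∧
      (deriv (fun τ' => uSec κ μ L g (p.1, τ') lam) p.2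
          - (4 * (Real.pi : ℂ) * Complex.I * κ)⁻¹ *
            ∑ ν : Fin r, deriv (deriv (fun z => uSec κ μ L g p (Function.update lam ν z))) (lam ν)
        = (∑ i : Fin M, ∑ j ∈ Finset.univ.filter (fun j : Fin M => i < j),
            ((∑ ν : Fin r, μ i ν * μ j ν) / κ) * deriv (fun τ' => L i j (p.1, τ')) p.2)
            * uSec κ μ L g p lam) := by
  intro p hp lam
  have hτ : 0 < p.2.im := hUτ p hp
  have hUp : U ∈ 𝓝 p := hUopen.mem_nhds hp
  have hL (i j : Fin M) (hij : i < j) : DifferentiableAt ℂ (L i j) p :=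
    (hLdiff i j hij).differentiableAt hUp
  have hexp (i j : Fin M) (hij : i < j) :
      ∀ᶠ q in 𝓝 p, exp (L i j q) = EF (q.1 i - q.1 j) q.2 :=
    eventually_of_mem hUp (hLexp i j hij)
  have hgp (x : Fin r → ℂ) : DifferentiableAt ℂ (fun q : (Fin r → ℂ) × ℂ => g q.1 q.2) (x, p.2) :=
    hg.differentiableAt ((isOpen_lt continuous_const (by fun_prop)).mem_nhds hτ)
  have hgx : Differentiable ℂ fun x => g x p.2 := fun x =>
    (hgp x).comp x (f := fun x => (x, p.2)) (by fun_prop)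
  have hgτ (x : Fin r → ℂ) : DifferentiableAt ℂ (g x) p.2 :=
    (hgp x).comp p.2 (f := fun τ => (x, τ)) (by fun_prop)
  exact ⟨uSec_transport_eq hτ hL hexp hgx, uSec_heat_eq hκ hL hgτ fun x => hheat x p.2 hτ⟩

/-- the sections `Φ_μ(t,τ)·g(λ − κ⁻¹∑ μ_i t_i, τ)`, with `g` a solution of
the heat equation, are horizontal for the abelian KZB connection. -/
theorem abelian_KZB_horizontal_sections (r M : ℕ) (hr : 1 ≤ r) (hM : 1 ≤ M)
    (κ : ℂ) (hκ : κ ≠ 0)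
    (μ : Fin M → Fin r → ℂ) (hμ : ∑ i : Fin M, μ i = 0)
    (U : Set ((Fin M → ℂ) × ℂ)) (hUopen : IsOpen U)
    (hUτ : ∀ p ∈ U, 0 < p.2.im)
    (hUt : ∀ p ∈ U, ∀ i j : Fin M, i < j → ¬ inLattice p.2 (p.1 i - p.1 j))
    (L : Fin M → Fin M → ((Fin M → ℂ) × ℂ) → ℂ)
    (hLdiff : ∀ i j : Fin M, i < j → DifferentiableOn ℂ (L i j) U)
    (hLexp : ∀ i j : Fin M, i < j → ∀ p ∈ U, Complex.exp (L i j p) = EF (p.1 i - p.1 j) p.2)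
    (g : (Fin r → ℂ) → ℂ → ℂ)
    (hg : DifferentiableOn ℂ (fun p : (Fin r → ℂ) × ℂ => g p.1 p.2)
      {p : (Fin r → ℂ) × ℂ | 0 < p.2.im})
    (hheat : ∀ (lam : Fin r → ℂ) (τ : ℂ), 0 < τ.im →
      4 * (Real.pi : ℂ) * Complex.I * κ * deriv (fun τ' => g lam τ') τ =
        ∑ ν : Fin r, deriv (deriv (fun z => g (Function.update lam ν z) τ)) (lam ν)) :
    ∀ p ∈ U, ∀ (lam : Fin r → ℂ),
      (∀ i : Fin M,
        deriv (fun z => uSec κ μ L g (Function.update p.1 i z, p.2) lam) (p.1 i)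
          + κ⁻¹ * ∑ ν : Fin r, μ i ν *
              deriv (fun z => uSec κ μ L g p (Function.update lam ν z)) (lam ν)
        = (∑ j ∈ Finset.univ.filter (fun j : Fin M => j ≠ i),
            ((∑ ν : Fin r, μ i ν * μ j ν) / κ) * rhoF (p.1 i - p.1 j) p.2)
            * uSec κ μ L g p lam) ∧
      (deriv (fun τ' => uSec κ μ L g (p.1, τ') lam) p.2
          - (4 * (Real.pi : ℂ) * Complex.I * κ)⁻¹ *
            ∑ ν : Fin r, deriv (deriv (fun z => uSec κ μ L g p (Function.update lam ν z))) (lam ν)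
        = (∑ i : Fin M, ∑ j ∈ Finset.univ.filter (fun j : Fin M => i < j),
            ((∑ ν : Fin r, μ i ν * μ j ν) / κ) * deriv (fun τ' => L i j (p.1, τ')) p.2)
            * uSec κ μ L g p lam) := by
  exact abelian_KZB_horizontal_sections_general r M κ hκ μ U hUopen hUτ L hLdiff hLexp g hg hheat
end
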